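/- Let $n \ge 1$, let $a, b$ be $n \times n$ complex matrices with $\|a\|_p = 1$ and $\|b\|_q = 1$, where $1 < p \le 2$ and $1/p + 1/q = 1$. Then $\mathrm{Tr}(|b|^2 \, |a|^{2-p}) \le 1$, where the left-hand side is a real number (the trace of the product of the positive semidefinite matrices $|b|^2$ and $|a|^{2-p}$, which has real trace). -/

import Mathlib

open Matrix
open scoped ComplexOrder

/-- `matAbs x` is `|x|`, the unique positive semidefinite square root of `xᴴ * x`. -/
noncomputable def matAbs {n : ℕ} (x : Matrix (Fin n) (Fin n) ℂ) : Matrix (Fin n) (Fin n) ℂ :=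
  open scoped MatrixOrder in CFC.sqrt (xᴴ * x)

/-- `matRpow x r` is the real power `x ^ r` defined via the continuous functional calculus. -/
noncomputable def matRpow {n : ℕ} (x : Matrix (Fin n) (Fin n) ℂ) (r : ℝ) :
    Matrix (Fin n) (Fin n) ℂ :=
  cfc (fun t : ℝ => t ^ r) x

/-- The Schatten `r`-norm `(Tr(|x|^r))^(1/r)`. -/
noncomputable def schatten {n : ℕ} (r : ℝ) (x : Matrix (Fin n) (Fin n) ℂ) : ℝ :=
  (Matrix.trace (matRpow (matAbs x) r)).re ^ (1 / r)

lemma aux_psd {n : ℕ} (x : Matrix (Fin n) (Fin n) ℂ) : (matAbs x).PosSemidef := by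
  open scoped MatrixOrder in
  exact Matrix.nonneg_iff_posSemidef.mp (CFC.sqrt_nonneg _)

lemma aux_trace {n : ℕ} (A B : Matrix (Fin n) (Fin n) ℂ) (hA : A.PosSemidef)
    (hB : B.PosSemidef) :
    ∃ (w : Fin n → Fin n → ℝ) (β α : Fin n → ℝ), (∀ i j, 0 ≤ w i j) ∧ (∀ i, 0 ≤ β i) ∧
      (∀ i, 0 ≤ α i) ∧ ∀ f g : ℝ → ℝ,
        (Matrix.trace (cfc f B * cfc g A)).re = ∑ i, ∑ j, w i j * (f (β i) * g (α j)) := by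
  let V : Matrix (Fin n) (Fin n) ℂ := hB.1.eigenvectorUnitary
  let U : Matrix (Fin n) (Fin n) ℂ := hA.1.eigenvectorUnitary
  refine ⟨fun i j => Complex.normSq ((star V * U) i j), hB.1.eigenvalues, hA.1.eigenvalues,
    fun i j => Complex.normSq_nonneg _, hB.eigenvalues_nonneg, hA.eigenvalues_nonneg, ?_⟩
  intro f g
  rw [hA.1.cfc_eq, hB.1.cfc_eq, Matrix.IsHermitian.cfc, Matrix.IsHermitian.cfc,
    Unitary.conjStarAlgAut_apply, Unitary.conjStarAlgAut_apply]
  change (Matrix.trace ((V * diagonal _ * star V) * (U * diagonal _ * star U))).re = _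
  have key : ∀ D E : Matrix (Fin n) (Fin n) ℂ,
      Matrix.trace ((V * D * star V) * (U * E * star U))
        = Matrix.trace (D * (star V * U) * (E * star (star V * U))) := by
    intro D E
    rw [mul_assoc V, mul_assoc V, Matrix.trace_mul_comm]
    simp only [star_mul, star_star, mul_assoc]
  rw [key]
  generalize star V * U = W
  rw [Matrix.trace, Complex.re_sum]
  refine Finset.sum_congr rfl fun i _ => ?_
  rw [Matrix.diag_apply, Matrix.mul_apply, Complex.re_sum]
  refine Finset.sum_congr rfl fun j _ => ?_
  rw [Matrix.diagonal_mul, Matrix.diagonal_mul, Matrix.star_apply]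
  simp [Complex.normSq_apply]
  ring

theorem trace_sq_mul_rpow_le_one {n : ℕ} (hn : 1 ≤ n)
    (a b : Matrix (Fin n) (Fin n) ℂ) (p q : ℝ)
    (hp : 1 < p) (hp2 : p ≤ 2) (hpq : 1 / p + 1 / q = 1)
    (ha : schatten p a = 1) (hb : schatten q b = 1) :
    (Matrix.trace (matRpow (matAbs b) 2 * matRpow (matAbs a) (2 - p))).re ≤ 1 := by
  obtain ⟨w, β, α, hw, hβ, hα, h⟩ := aux_trace (matAbs a) (matAbs b) (aux_psd a) (aux_psd b)
  have hp0 : 0 < p := by linarith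
  have hq1 : 0 < 1 / q := by
    have : 1 / p < 1 := by rw [div_lt_one hp0]; exact hp
    linarith
  have hq0 : 0 < q := one_div_pos.mp hq1
  have hsa : IsSelfAdjoint (matAbs a) := (aux_psd a).1
  have hsb : IsSelfAdjoint (matAbs b) := (aux_psd b).1
  have hA := h (fun _ => 1) (fun t => t ^ p)
  have hB := h (fun t => t ^ q) (fun _ => 1)
  rw [cfc_const_one ℝ (matAbs b) hsb, one_mul] at hA
  rw [cfc_const_one ℝ (matAbs a) hsa, mul_one] at hB
  simp only [one_mul, mul_one] at hA hB
  have e1 : ∀ (r t : ℝ), 0 < r → 0 ≤ t → t ^ (1 / r) = 1 → t = 1 := by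
    intro r t hr ht h1
    have h2 : (t ^ (1 / r)) ^ r = t := by
      rw [← Real.rpow_mul ht, one_div_mul_cancel hr.ne', Real.rpow_one]
    rw [← h2, h1, Real.one_rpow]
  have hA1 : ∑ i, ∑ j, w i j * α j ^ p = 1 := by
    refine e1 p _ hp0 (Finset.sum_nonneg fun i _ => Finset.sum_nonneg fun j _ =>
      mul_nonneg (hw i j) (Real.rpow_nonneg (hα j) _)) ?_
    rw [← hA]; exact ha
  have hB1 : ∑ i, ∑ j, w i j * β i ^ q = 1 := by
    refine e1 q _ hq0 (Finset.sum_nonneg fun i _ => Finset.sum_nonneg fun j _ =>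
      mul_nonneg (hw i j) (Real.rpow_nonneg (hβ i) _)) ?_
    rw [← hB]; exact hb
  have hwt : 2 / q + (2 - p) / p = 1 := by
    have h1 : (2 - p) / p = 2 * (1 / p) - 1 := by field_simp
    have h2 : 2 / q = 2 * (1 / q) := by ring
    rw [h1, h2]; linarith
  have hY : ∀ i j, β i ^ (2 : ℝ) * α j ^ (2 - p) ≤
      2 / q * β i ^ q + (2 - p) / p * α j ^ p := by
    intro i j
    have := Real.geom_mean_le_arith_mean2_weighted (w₁ := 2 / q) (w₂ := (2 - p) / p)
      (by positivity) (div_nonneg (by linarith) hp0.le) (Real.rpow_nonneg (hβ i) q)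
      (Real.rpow_nonneg (hα j) p) hwt
    rwa [← Real.rpow_mul (hβ i), ← Real.rpow_mul (hα j), mul_div_cancel₀ _ hq0.ne',
      mul_div_cancel₀ _ hp0.ne'] at this
  calc (Matrix.trace (matRpow (matAbs b) 2 * matRpow (matAbs a) (2 - p))).re
      = ∑ i, ∑ j, w i j * (β i ^ (2 : ℝ) * α j ^ (2 - p)) := h _ _
    _ ≤ ∑ i, ∑ j, w i j * (2 / q * β i ^ q + (2 - p) / p * α j ^ p) :=
        Finset.sum_le_sum fun i _ => Finset.sum_le_sum fun j _ =>
          mul_le_mul_of_nonneg_left (hY i j) (hw i j)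
    _ = 2 / q * (∑ i, ∑ j, w i j * β i ^ q) + (2 - p) / p * ∑ i, ∑ j, w i j * α j ^ p := by
        simp only [Finset.mul_sum, ← Finset.sum_add_distrib]
        refine Finset.sum_congr rfl fun i _ => Finset.sum_congr rfl fun j _ => ?_
        ring
    _ = 1 := by rw [hA1, hB1, mul_one, mul_one, hwt]
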